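/- Let {n_k} be a sequence of positive integers with sup_k V(n_k) = ∞ and let Φ: ℕ₊ → [1,∞) be nondecreasing with Φ(n) → ∞ and limsup_k V(n_k)^2/Φ(n_k) = ∞. Then there exists a martingale F ∈ H_{1/2}(G) such that sup_k ‖σ_{n_k} F / Φ(n_k)‖_{L_{1/2}} = ∞. -/

import Mathlib

open MeasureTheory Filter Topology ENNReal NNReal

noncomputable section

/-- The dyadic group `G = (ℤ/2)^ℕ`. -/
abbrev G : Type := ℕ → ZMod 2

instance : TopologicalSpace (ZMod 2) := ⊥
instance : DiscreteTopology (ZMod 2) := ⟨rfl⟩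
instance : MeasurableSpace G := borel G
instance : BorelSpace G := ⟨rfl⟩

/-- Normalized Haar measure on `G`. -/
def μG : Measure G := Measure.addHaarMeasure ⟨⟨Set.univ, isCompact_univ⟩, by simp⟩

/-- Cylinder `I_n(x) = {y : y_0 = x_0, ..., y_{n-1} = x_{n-1}}`. -/
def cyl (n : ℕ) (x : G) : Set G := {y | ∀ k < n, y k = x k}

/-- `I_n = I_n(0)`. -/
def I₀ (n : ℕ) : Set G := cyl n 0

/-- `e t`: the element of `G` with a single 1 in coordinate `t`. -/
def e (t : ℕ) : G := fun k => if k = t then 1 else 0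

/-- Rademacher functions `r_k(x) = (-1)^{x_k}`. -/
def rade (k : ℕ) (x : G) : ℝ := (-1 : ℝ) ^ (x k).val

/-- Walsh functions `w_n = ∏ r_k^{n_k}` (binary digits `n_k` of `n`). -/
def walsh (n : ℕ) (x : G) : ℝ :=
  ∏ k ∈ Finset.range (n + 1), if n.testBit k then rade k x else 1

/-- Walsh–Dirichlet kernel `D_n = ∑_{k<n} w_k`. -/
def D (n : ℕ) (x : G) : ℝ := ∑ k ∈ Finset.range n, walsh k x

/-- Walsh–Fejér kernel `K_n = (1/n) ∑_{k=1}^n D_k`. -/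
def K (n : ℕ) (x : G) : ℝ := (1 / n) * ∑ k ∈ Finset.Icc 1 n, D k x

/-- Binary variation `V(n) = n_0 + ∑_{k≥1} |n_k - n_{k-1}|`. -/
def V (n : ℕ) : ℕ :=
  (if n.testBit 0 then 1 else 0) +
    ∑ k ∈ Finset.Icc 1 (n + 1), if n.testBit k ≠ n.testBit (k - 1) then 1 else 0

/-- `|n|`: index of the highest nonzero binary digit of `n`. -/
def hi (n : ℕ) : ℕ := Nat.log 2 n

/-- `[n]`: index of the lowest nonzero binary digit of `n`. -/
def lo (n : ℕ) : ℕ := padicValNat 2 n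

/-- `d(n) = |n| - [n]`. -/
def dd (n : ℕ) : ℕ := hi n - lo n

/-- A dyadic martingale: `F n` depends only on the first `n` coordinates, and
`F n` is the average of the two possible extensions, i.e. the martingale property
with respect to the dyadic filtration. -/
def IsDyadicMartingale (F : ℕ → G → ℝ) : Prop :=
  (∀ n x y, (∀ k < n, x k = y k) → F n x = F n y) ∧
  (∀ n x, F n x = (F (n+1) x + F (n+1) (Function.update x n (x n + 1))) / 2)

/-- `k`-th Walsh–Fourier coefficient of a martingale,
`F̂(k) = lim_n ∫ F_n w_k dμ` (the integrals are eventually constant). -/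
def mcoeff (F : ℕ → G → ℝ) (k : ℕ) : ℝ := ∫ x, F (k+1) x * walsh k x ∂μG

/-- Partial sums `S_m F` of the Walsh–Fourier series of a martingale. -/
def S (F : ℕ → G → ℝ) (m : ℕ) (x : G) : ℝ := ∑ j ∈ Finset.range m, mcoeff F j * walsh j x

/-- Fejér means `σ_n F = (1/n) ∑_{k=1}^n S_k F`. -/
def σ (F : ℕ → G → ℝ) (n : ℕ) (x : G) : ℝ := (1 / n) * ∑ k ∈ Finset.Icc 1 n, S F k x

/-- `H_p` quasi-norm of a martingale: `‖sup_n |F_n|‖_{L_p}`. -/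
def HpNorm (p : ℝ) (F : ℕ → G → ℝ) : ℝ≥0∞ :=
  (∫⁻ x, (⨆ n, (‖F n x‖₊ : ℝ≥0∞)) ^ p ∂μG) ^ (1 / p)

/-- Membership in the martingale Hardy space `H_p(G)`. -/
def MemHp (p : ℝ) (F : ℕ → G → ℝ) : Prop := IsDyadicMartingale F ∧ HpNorm p F < ⊤

/-- `L_p` quasi-norm of a function on `G`. -/
def LpN (p : ℝ) (f : G → ℝ) : ℝ≥0∞ := (∫⁻ x, (‖f x‖₊ : ℝ≥0∞) ^ p ∂μG) ^ (1 / p)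

/-- Weak `L_p` quasi-norm: `‖f‖_{L_{p,∞}} = sup_{λ>0} λ μ(|f|>λ)^{1/p}`. -/
def wLp (p : ℝ) (f : G → ℝ) : ℝ≥0∞ :=
  ⨆ t : ℝ≥0, (t : ℝ≥0∞) * (μG {x | (t : ℝ) < |f x|}) ^ (1 / p)

/-- Walsh–Fourier coefficient of an integrable function. -/
def fcoeff (f : G → ℝ) (j : ℕ) : ℝ := ∫ x, f x * walsh j x ∂μG

/-- Partial sums of the Walsh–Fourier series of a function. -/
def Sf (f : G → ℝ) (m : ℕ) (x : G) : ℝ := ∑ j ∈ Finset.range m, fcoeff f j * walsh j x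

/-- Fejér means of the Walsh–Fourier series of a function. -/
def σf (f : G → ℝ) (n : ℕ) (x : G) : ℝ := (1 / n) * ∑ k ∈ Finset.Icc 1 n, Sf f k x

/-- The martingale `(S_{2^m} g)_m` generated by a function `g`; used to interpret the
`H_p` norm of a function such as `σ_n F`. -/
def funMart (g : G → ℝ) : ℕ → G → ℝ := fun m => Sf g (2 ^ m)

/-- Modulus of continuity in `H_p`: `ω_{H_p}(1/2^n, F) = ‖F - S_{2^n} F‖_{H_p}`,
where `F - S_{2^n}F` is the martingale with `m`-th term `F_m - S_{min(2^n, 2^m)}F`. -/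
def ωHp (p : ℝ) (n : ℕ) (F : ℕ → G → ℝ) : ℝ≥0∞ :=
  HpNorm p (fun m x => F m x - S F (min (2 ^ n) (2 ^ m)) x)

/-- The a.e. limit of a martingale (as a limsup, which agrees a.e. with the limit
for martingales in `H_p`). -/
def mLim (F : ℕ → G → ℝ) (x : G) : ℝ := Filter.limsup (fun m => F m x) Filter.atTop

/-- The set `E_l := I_{l+1}(e_{l-1} + e_l)`, with the convention
`I_1(e_{-1}+e_0) = I_2(e_0+e_1)` for `l = 0`. -/
def Eset (l : ℕ) : Set G :=
  if l = 0 then cyl 2 (e 0 + e 1) else cyl (l + 1) (e (l - 1) + e l)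

lemma rade_of_eq_zero {k : ℕ} {x : G} (h : x k = 0) : rade k x = 1 := by
  simp [rade, h]

lemma rade_of_eq_one {k : ℕ} {x : G} (h : x k = 1) : rade k x = -1 := by
  simp [rade, h, ZMod.val_one]

lemma zmod_two_cases (a : ZMod 2) : a = 0 ∨ a = 1 := by
  revert a; decide

lemma abs_rade (k : ℕ) (x : G) : |rade k x| = 1 := by
  simp [rade]

lemma rade_add_one {k : ℕ} {x y : G} (h : y k = x k + 1) : rade k y = -rade k x := by
  rcases zmod_two_cases (x k) with h0 | h0
  · rw [rade_of_eq_zero h0, rade_of_eq_one (by simp [h, h0])]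
  · have h1 : y k = 0 := by rw [h, h0]; decide
    rw [rade_of_eq_one h0, rade_of_eq_zero h1]; norm_num

lemma rade_congr {k : ℕ} {x y : G} (h : x k = y k) : rade k x = rade k y := by
  simp [rade, h]

lemma walsh_eq_prod_range {n N : ℕ} (h : n < 2 ^ N) (x : G) :
    walsh n x = ∏ k ∈ Finset.range N, if n.testBit k then rade k x else 1 := by
  have key : ∀ {A B : ℕ}, A ≤ B → n < 2 ^ A →
      ∏ k ∈ Finset.range A, (if n.testBit k then rade k x else 1) =
        ∏ k ∈ Finset.range B, if n.testBit k then rade k x else 1 := by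
    intro A B hAB hA
    refine Finset.prod_subset (Finset.range_mono hAB) fun k _ hk => ?_
    have : n.testBit k = false := Nat.testBit_lt_two_pow
      (hA.trans_le (Nat.pow_le_pow_right (by norm_num) (by simpa using hk)))
    simp [this]
  have hn : n < 2 ^ (n + 1) := (Nat.lt_succ_self n).trans (Nat.lt_two_pow_self)
  unfold walsh
  rcases le_total (n + 1) N with h' | h'
  · exact key h' hn
  · exact (key h' h).symm

lemma walsh_two_pow_add {r j : ℕ} (h : j < 2 ^ r) (x : G) :
    walsh (2 ^ r + j) x = rade r x * walsh j x := by
  rw [walsh_eq_prod_range (N := r + 1) (by rw [pow_succ]; omega), walsh_eq_prod_range h,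
    Finset.prod_range_succ, mul_comm]
  congr 1
  · simp [Nat.testBit_two_pow_add_eq, Nat.testBit_lt_two_pow h]
  · refine Finset.prod_congr rfl fun k hk => ?_
    rw [Nat.testBit_two_pow_add_gt (Finset.mem_range.1 hk)]

lemma abs_walsh (n : ℕ) (x : G) : |walsh n x| = 1 := by
  unfold walsh
  rw [Finset.abs_prod]
  refine Finset.prod_eq_one fun k _ => ?_
  split_ifs
  · exact abs_rade k x
  · simp

lemma walsh_mul_self (n : ℕ) (x : G) : walsh n x * walsh n x = 1 := by
  rw [← abs_mul_abs_self, abs_walsh, one_mul]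

lemma walsh_congr {n N : ℕ} (h : n < 2 ^ N) {x y : G} (hxy : ∀ k < N, x k = y k) :
    walsh n x = walsh n y := by
  rw [walsh_eq_prod_range h, walsh_eq_prod_range h]
  refine Finset.prod_congr rfl fun k hk => ?_
  rw [rade_congr (hxy k (Finset.mem_range.1 hk))]

lemma walsh_eq_one {n N : ℕ} (h : n < 2 ^ N) {x : G} (hx : ∀ k < N, x k = 0) :
    walsh n x = 1 := by
  rw [walsh_eq_prod_range h]
  refine Finset.prod_eq_one fun k hk => ?_
  rw [rade_of_eq_zero (hx k (Finset.mem_range.1 hk)), ite_self]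

lemma D_congr {n N : ℕ} (h : n ≤ 2 ^ N) {x y : G} (hxy : ∀ k < N, x k = y k) :
    D n x = D n y :=
  Finset.sum_congr rfl fun _ hj => walsh_congr ((Finset.mem_range.1 hj).trans_le h) hxy

lemma D_eq_natCast {n N : ℕ} (h : n ≤ 2 ^ N) {x : G} (hx : ∀ k < N, x k = 0) :
    D n x = n := by
  unfold D
  rw [Finset.sum_congr rfl fun j hj => walsh_eq_one ((Finset.mem_range.1 hj).trans_le h) hx]
  simp

lemma D_two_pow_add {r q : ℕ} (h : q ≤ 2 ^ r) (x : G) :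
    D (2 ^ r + q) x = D (2 ^ r) x + rade r x * D q x := by
  unfold D
  rw [Finset.sum_range_add, Finset.mul_sum]
  congr 1
  exact Finset.sum_congr rfl fun j hj =>
    walsh_two_pow_add ((Finset.mem_range.1 hj).trans_le h) x

lemma D_two_pow_succ (r : ℕ) (x : G) :
    D (2 ^ (r + 1)) x = (1 + rade r x) * D (2 ^ r) x := by
  rw [pow_succ, mul_two, D_two_pow_add le_rfl]; ring

/-- The unnormalized Fejér kernel `n K_n = D_1 + ⋯ + D_n`. -/
def fejerSum (n : ℕ) (x : G) : ℝ := ∑ k ∈ Finset.range n, D (k + 1) x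

lemma fejerSum_two_pow_add {r q : ℕ} (h : q ≤ 2 ^ r) (x : G) :
    fejerSum (2 ^ r + q) x =
      fejerSum (2 ^ r) x + (q * D (2 ^ r) x + rade r x * fejerSum q x) := by
  unfold fejerSum
  rw [Finset.sum_range_add, Finset.mul_sum]
  congr 1
  rw [Finset.sum_congr rfl fun j hj => by
    rw [add_assoc, D_two_pow_add (q := j + 1) (by have := Finset.mem_range.1 hj; omega) x],
    Finset.sum_add_distrib]
  simp

lemma fejerSum_two_pow_succ (r : ℕ) (x : G) :
    fejerSum (2 ^ (r + 1)) x = (1 + rade r x) * fejerSum (2 ^ r) x + 2 ^ r * D (2 ^ r) x := by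
  rw [pow_succ, mul_two, fejerSum_two_pow_add le_rfl]; push_cast; ring

lemma fejerSum_eq {n N : ℕ} (h : n ≤ 2 ^ N) {x : G} (hx : ∀ k < N, x k = 0) :
    fejerSum n x = n * (n + 1) / 2 := by
  induction n with
  | zero => simp [fejerSum]
  | succ n ih =>
    have := ih (by omega)
    unfold fejerSum at this ⊢
    rw [Finset.sum_range_succ, this, D_eq_natCast h hx]
    push_cast; ring

/-- The set of points whose first nonzero coordinate is `p` and with `x_{p+1} ≠ 0`. -/
def peak (p : ℕ) : Set G := cyl (p + 2) (e p + e (p + 1))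

lemma peak_apply_lt {p : ℕ} {x : G} (hx : x ∈ peak p) {k : ℕ} (hk : k < p) : x k = 0 := by
  rw [hx k (by omega)]; simp [e, hk.ne, show k ≠ p + 1 by omega]

lemma peak_apply_self {p : ℕ} {x : G} (hx : x ∈ peak p) : x p = 1 := by
  rw [hx p (by omega)]; simp [e]

lemma peak_apply_succ {p : ℕ} {x : G} (hx : x ∈ peak p) : x (p + 1) = 1 := by
  rw [hx (p + 1) (by omega)]; simp [e]

lemma D_two_pow_eq_zero {p r : ℕ} (hr : p + 1 ≤ r) {x : G} (hx : x p = 1) :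
    D (2 ^ r) x = 0 := by
  induction r, hr using Nat.le_induction with
  | base => rw [D_two_pow_succ, rade_of_eq_one hx]; ring
  | succ r _ ih => rw [D_two_pow_succ, ih, mul_zero]

lemma fejerSum_two_pow_eq_zero {p r : ℕ} (hr : p + 2 ≤ r) {x : G} (hx : x ∈ peak p) :
    fejerSum (2 ^ r) x = 0 := by
  induction r, hr using Nat.le_induction with
  | base =>
    rw [fejerSum_two_pow_succ, rade_of_eq_one (peak_apply_succ hx),
      D_two_pow_eq_zero le_rfl (peak_apply_self hx)]; ring
  | succ r hr ih =>
    rw [fejerSum_two_pow_succ, ih, D_two_pow_eq_zero (by omega) (peak_apply_self hx)]; ring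

lemma mod_two_pow_succ (n r : ℕ) :
    n % 2 ^ (r + 1) = 2 ^ r * (n.testBit r).toNat + n % 2 ^ r := by
  rw [Nat.mod_pow_succ, Nat.toNat_testBit, add_comm]

lemma abs_fejerSum_mod {n p N : ℕ} (hN : p + 2 ≤ N) {x : G} (hx : x ∈ peak p) :
    |fejerSum (n % 2 ^ N) x| = |fejerSum (n % 2 ^ (p + 2)) x| := by
  induction N, hN using Nat.le_induction with
  | base => rfl
  | succ N hN ih =>
    rw [← ih, mod_two_pow_succ]
    cases h : n.testBit N
    · simp
    · have hlt : n % 2 ^ N ≤ 2 ^ N := (Nat.mod_lt _ (by positivity)).le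
      simp only [Bool.toNat_true, mul_one]
      rw [fejerSum_two_pow_add hlt, fejerSum_two_pow_eq_zero hN hx,
        D_two_pow_eq_zero (by omega) (peak_apply_self hx)]
      simp [abs_mul, abs_rade]

lemma le_abs_fejerSum_mod {n p N : ℕ} (hN : p + 2 ≤ N) (h0 : n.testBit p = false)
    (h1 : n.testBit (p + 1) = true) {x : G} (hx : x ∈ peak p) :
    4 ^ p / 4 ≤ |fejerSum (n % 2 ^ N) x| := by
  have hlt : n % 2 ^ p < 2 ^ p := Nat.mod_lt _ (by positivity)
  have hp2 : n % 2 ^ (p + 2) = 2 ^ (p + 1) + n % 2 ^ p := by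
    rw [mod_two_pow_succ, h1, mod_two_pow_succ, h0]; simp
  rw [abs_fejerSum_mod hN hx, hp2, fejerSum_two_pow_add (by rw [pow_succ]; omega),
    rade_of_eq_one (peak_apply_succ hx), D_two_pow_eq_zero le_rfl (peak_apply_self hx),
    fejerSum_two_pow_succ, rade_of_eq_one (peak_apply_self hx),
    D_eq_natCast le_rfl fun k hk => peak_apply_lt hx hk,
    fejerSum_eq hlt.le fun k hk => peak_apply_lt hx hk]
  set q := n % 2 ^ p
  have hq : (q : ℝ) + 1 ≤ 2 ^ p := by exact_mod_cast hlt
  have hq0 : (0 : ℝ) ≤ q := by positivity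
  have h4 : (4 : ℝ) ^ p = 2 ^ p * 2 ^ p := by rw [← mul_pow]; norm_num
  rw [h4]
  refine le_trans ?_ (le_abs_self _)
  push_cast
  nlinarith

lemma variation_aux (n L : ℕ) :
    ((if n.testBit 0 then 1 else 0) +
      ∑ k ∈ Finset.Icc 1 L, if n.testBit k ≠ n.testBit (k - 1) then 1 else 0) +
        (if n.testBit L then 1 else 0) =
    2 * (if n.testBit 0 then 1 else 0) + 2 * ((Finset.range L).filter
      fun p => n.testBit p = false ∧ n.testBit (p + 1) = true).card := by
  induction L with
  | zero => cases n.testBit 0 <;> simp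
  | succ L ih =>
    rw [Finset.sum_Icc_succ_top (by omega), Finset.range_add_one, Finset.filter_insert]
    rw [Nat.add_sub_cancel]
    cases h0 : n.testBit L <;> cases h1 : n.testBit (L + 1) <;> simp [h0, h1] at ih ⊢ <;> omega

/-- The positions `p` with `p + 1 < N` at which a block of ones of `n` starts at `p + 1`. -/
def blockStarts (n N : ℕ) : Finset ℕ :=
  (Finset.range (N - 1)).filter fun p => n.testBit p = false ∧ n.testBit (p + 1) = true

lemma V_le_card_blockStarts {n : ℕ} :
    V n ≤ 2 * (blockStarts n (hi n)).card + 4 := by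
  have h := variation_aux n (n + 1)
  have hsub : (Finset.range (n + 1)).filter
      (fun p => n.testBit p = false ∧ n.testBit (p + 1) = true) ⊆
      insert (hi n - 1) (blockStarts n (hi n)) := by
    intro p hp
    simp only [blockStarts, Finset.mem_filter, Finset.mem_range, Finset.mem_insert] at hp ⊢
    have hle : p + 1 ≤ hi n := by
      by_contra hlt
      have : n.testBit (p + 1) = false := Nat.testBit_lt_two_pow
        ((Nat.lt_pow_succ_log_self (by norm_num) n).trans_le
          (Nat.pow_le_pow_right (by norm_num) (by unfold hi at hlt; omega)))
      simp [this] at hp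
    by_cases hpe : p = hi n - 1
    · exact Or.inl hpe
    · exact Or.inr ⟨by omega, hp.2⟩
  have hcard := (Finset.card_le_card hsub).trans (Finset.card_insert_le _ _)
  unfold V
  have : (if n.testBit 0 then 1 else 0) ≤ 1 := by split_ifs <;> simp
  omega

instance : IsProbabilityMeasure μG :=
  ⟨Measure.addHaarMeasure_self (K₀ := ⟨⟨Set.univ, isCompact_univ⟩, by simp⟩)⟩

instance : μG.IsAddLeftInvariant := by unfold μG; infer_instance

lemma continuous_rade (k : ℕ) : Continuous (rade k) :=
  (continuous_of_discreteTopology (f := fun z : ZMod 2 => (-1 : ℝ) ^ z.val)).comp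
    (continuous_apply k)

lemma continuous_walsh (n : ℕ) : Continuous (walsh n) := by
  unfold walsh
  refine continuous_finsetProd _ fun k _ => ?_
  split_ifs
  · exact continuous_rade k
  · exact continuous_const

lemma continuous_D (n : ℕ) : Continuous (D n) := by
  unfold D
  exact continuous_finsetSum _ fun k _ => continuous_walsh k

lemma integrable_of_continuous {f : G → ℝ} (hf : Continuous f) : Integrable f μG :=
  hf.integrable_of_hasCompactSupport (HasCompactSupport.of_compactSpace f)

lemma isClopen_cyl (n : ℕ) (x : G) : IsClopen (cyl n x) := by
  have : cyl n x = ⋂ k ∈ Finset.range n, (fun y : G => y k) ⁻¹' {x k} := by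
    ext y; simp [cyl]
  rw [this]
  exact isClopen_biInter_finset fun k _ =>
    (isClopen_discrete _).preimage (continuous_apply k)

lemma measurableSet_cyl (n : ℕ) (x : G) : MeasurableSet (cyl n x) :=
  (isClopen_cyl n x).isOpen.measurableSet

lemma e_self (n : ℕ) : e n n = 1 := by simp [e]

lemma e_of_ne {n k : ℕ} (h : k ≠ n) : e n k = 0 := by simp [e, h]

lemma measure_cyl (n : ℕ) (x : G) : μG (cyl n x) = (2⁻¹ : ℝ≥0∞) ^ n := by
  induction n with
  | zero =>
    have : cyl 0 x = Set.univ := by ext y; simp [cyl]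
    rw [this, measure_univ, pow_zero]
  | succ n ih =>
    have hpre : (fun y => e n + y) ⁻¹' cyl (n + 1) x = cyl n x \ cyl (n + 1) x := by
      ext y
      simp only [cyl, Set.mem_preimage, Set.mem_ofPred_eq, Set.mem_sdiff, Pi.add_apply]
      constructor
      · intro h
        refine ⟨fun k hk => ?_, fun h' => ?_⟩
        · simpa [e_of_ne hk.ne] using h k (by omega)
        · have h1 := h n (by omega)
          rw [h' n (by omega), e_self] at h1
          simp at h1
      · rintro ⟨h, h'⟩ k hk
        rcases Nat.lt_succ_iff_lt_or_eq.1 hk with hk' | rfl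
        · simpa [e_of_ne hk'.ne] using h k hk'
        · have hne : y k ≠ x k := fun hyx => h' fun j hj => by
            rcases Nat.lt_succ_iff_lt_or_eq.1 hj with hj' | rfl
            · exact h j hj'
            · exact hyx
          rw [e_self]
          revert hne
          generalize y k = a
          generalize x k = b
          revert a b
          decide
    have hsub : cyl (n + 1) x ⊆ cyl n x := fun y hy k hk => hy k (by omega)
    have h1 : μG (cyl n x \ cyl (n + 1) x) = μG (cyl (n + 1) x) := by
      rw [← hpre, measure_preimage_add]
    have h2 := measure_sdiff_add_inter (μ := μG) (s := cyl n x) (measurableSet_cyl (n + 1) x)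
    rw [h1, Set.inter_eq_right.2 hsub, ih, ← two_mul] at h2
    rw [pow_succ, ← h2, mul_comm, ← mul_assoc, ENNReal.inv_mul_cancel (by simp) (by simp),
      one_mul]

lemma walsh_add_e {n t : ℕ} (x : G) :
    walsh n (e t + x) = if n.testBit t then -walsh n x else walsh n x := by
  set N := n + t + 1
  have hN : n < 2 ^ N := Nat.lt_two_pow_self.trans_le
    (Nat.pow_le_pow_right (by norm_num) (by omega))
  have ht : t ∈ Finset.range N := by simp [N]
  rw [walsh_eq_prod_range hN, walsh_eq_prod_range hN, ← Finset.mul_prod_erase _ _ ht,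
    ← Finset.mul_prod_erase _ (fun k => if n.testBit k then rade k x else 1) ht]
  have hr : rade t (e t + x) = -rade t x := rade_add_one (by simp [e_self, add_comm])
  have hrest : ∏ k ∈ (Finset.range N).erase t, (if n.testBit k then rade k (e t + x) else 1) =
      ∏ k ∈ (Finset.range N).erase t, if n.testBit k then rade k x else 1 :=
    Finset.prod_congr rfl fun k hk => by
      rw [rade_congr (x := e t + x) (y := x) (by simp [e_of_ne (Finset.ne_of_mem_erase hk)])]
  rw [hrest, hr]
  split_ifs <;> ring

lemma integral_walsh_mul (j k : ℕ) :
    ∫ x, walsh j x * walsh k x ∂μG = if j = k then 1 else 0 := by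
  split_ifs with h
  · subst h; simp [walsh_mul_self]
  · obtain ⟨t, ht⟩ := Nat.exists_testBit_ne_of_ne h
    have h1 := integral_add_left_eq_self (μ := μG) (fun x => walsh j x * walsh k x) (e t)
    have h2 : ∀ x, walsh j (e t + x) * walsh k (e t + x) = -(walsh j x * walsh k x) := by
      intro x
      rw [walsh_add_e, walsh_add_e]
      cases hj : j.testBit t <;> cases hk : k.testBit t <;> simp [hj, hk] at ht ⊢
    simp only [h2, integral_neg] at h1
    linarith

lemma measurableSet_peak (p : ℕ) : MeasurableSet (peak p) := measurableSet_cyl _ _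

lemma measure_peak (p : ℕ) : μG (peak p) = (2⁻¹ : ℝ≥0∞) ^ (p + 2) := measure_cyl _ _

lemma pairwise_disjoint_peak : Pairwise (Function.onFun Disjoint peak) := by
  have key : ∀ {p q : ℕ}, p < q → Disjoint (peak p) (peak q) := fun {p q} h => by
    rw [Set.disjoint_left]
    intro x hp hq
    have := peak_apply_self hp
    rw [peak_apply_lt hq h] at this
    simp at this
  intro p q h
  rcases h.lt_or_gt with h | h
  · exact key h
  · exact (key h).symm

lemma rpow_half_four_pow (p : ℕ) : ((4 : ℝ≥0∞) ^ p) ^ (1 / 2 : ℝ) = 2 ^ p := by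
  rw [show (4 : ℝ≥0∞) = 2 ^ (2 : ℕ) by norm_num, ← pow_mul, mul_comm, pow_mul,
    ← ENNReal.rpow_natCast (2 ^ p) 2, ← ENNReal.rpow_mul]
  norm_num

/-- The `L_{1/2}` size of the unnormalized Fejér kernel is at least the number of blocks. -/
lemma le_lintegral_fejerSum (n N : ℕ) :
    ((blockStarts n N).card : ℝ≥0∞) * 8⁻¹ ≤
      ∫⁻ x, (‖fejerSum (n % 2 ^ N) x‖₊ : ℝ≥0∞) ^ (1 / 2 : ℝ) ∂μG := by
  have h8 : ∀ p, (2 : ℝ≥0∞) ^ p / 2 * 2⁻¹ ^ (p + 2) = 8⁻¹ := by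
    intro p
    rw [div_eq_mul_inv, mul_assoc, ← pow_succ', ← ENNReal.inv_pow,
      show p + 2 + 1 = p + 3 by ring, pow_add, ENNReal.mul_inv (by simp) (by simp), ← mul_assoc,
      ENNReal.mul_inv_cancel (by simp) (by simp)]
    norm_num
  refine le_trans ?_ (setLIntegral_le_lintegral (⋃ p ∈ blockStarts n N, peak p) _)
  rw [lintegral_biUnion_finset (fun p _ q _ h => pairwise_disjoint_peak h)
    (fun p _ => measurableSet_peak p), ← nsmul_eq_mul]
  refine Finset.card_nsmul_le_sum _ _ _ fun p hp => ?_
  simp only [blockStarts, Finset.mem_filter, Finset.mem_range] at hp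
  rw [← h8 p, ← measure_peak, ← setLIntegral_const]
  refine setLIntegral_mono' (measurableSet_peak p) fun x hx => ?_
  have h := le_abs_fejerSum_mod (n := n) (N := N) (by omega) hp.2.1 hp.2.2 hx
  calc (2 : ℝ≥0∞) ^ p / 2 = (4 ^ p / 4) ^ (1 / 2 : ℝ) := by
        rw [ENNReal.div_rpow_of_nonneg _ _ (by norm_num), rpow_half_four_pow]
        congr 1
        simpa using (rpow_half_four_pow 1).symm
    _ ≤ _ := by
        refine ENNReal.rpow_le_rpow ?_ (by norm_num)
        rw [← enorm_eq_nnnorm, Real.enorm_eq_ofReal_abs]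
        refine le_trans (le_of_eq ?_) (ENNReal.ofReal_le_ofReal h)
        rw [ENNReal.ofReal_div_of_pos (by norm_num), ENNReal.ofReal_pow (by norm_num)]
        norm_num

/-- The atom `2^N (D_{2^{N+1}} - D_{2^N})`. -/
def atom (N : ℕ) (x : G) : ℝ := 2 ^ N * (rade N x * D (2 ^ N) x)

/-- The martingale with the atomic decomposition `∑ c_N a_N`. -/
def atomicMart (c : ℕ → ℝ) (n : ℕ) (x : G) : ℝ := ∑ N ∈ Finset.range n, c N * atom N x

/-- The Walsh–Fourier coefficients of `atomicMart c`. -/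
def atomicCoeff (c : ℕ → ℝ) (j : ℕ) : ℝ := if j = 0 then 0 else c (hi j) * 2 ^ hi j

lemma hi_two_pow_add {r j : ℕ} (h : j < 2 ^ r) : hi (2 ^ r + j) = r := by
  unfold hi
  rw [Nat.log_eq_iff (by simp)]
  constructor
  · omega
  · rw [pow_succ]; omega

lemma atomicMart_eq_sum (c : ℕ → ℝ) (n : ℕ) (x : G) :
    atomicMart c n x = ∑ j ∈ Finset.range (2 ^ n), atomicCoeff c j * walsh j x := by
  induction n with
  | zero => simp [atomicMart, atomicCoeff]
  | succ n ih =>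
    rw [pow_succ, mul_two, Finset.sum_range_add, ← ih]
    unfold atomicMart
    rw [Finset.sum_range_succ]
    congr 1
    unfold atom D
    simp only [Finset.mul_sum]
    refine Finset.sum_congr rfl fun j hj => ?_
    have hj := Finset.mem_range.1 hj
    rw [walsh_two_pow_add hj, atomicCoeff, hi_two_pow_add hj,
      if_neg (by have := Nat.two_pow_pos n; omega)]
    ring

lemma mcoeff_atomicMart (c : ℕ → ℝ) (k : ℕ) : mcoeff (atomicMart c) k = atomicCoeff c k := by
  unfold mcoeff
  have hk : k ∈ Finset.range (2 ^ (k + 1)) := Finset.mem_range.2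
    ((Nat.lt_succ_self k).trans Nat.lt_two_pow_self)
  simp only [atomicMart_eq_sum, Finset.sum_mul, mul_assoc]
  have hint : ∀ j, Integrable (fun x => walsh j x * walsh k x) μG := fun j =>
    integrable_of_continuous ((continuous_walsh j).mul (continuous_walsh k))
  rw [integral_finsetSum _ fun j _ => (hint j).const_mul _]
  simp only [integral_const_mul, integral_walsh_mul]
  simp [hk]

lemma isDyadicMartingale_atomicMart (c : ℕ → ℝ) : IsDyadicMartingale (atomicMart c) := by
  have hcongr : ∀ n x y, (∀ k < n, x k = y k) → atomicMart c n x = atomicMart c n y := by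
    intro n x y h
    rw [atomicMart_eq_sum, atomicMart_eq_sum]
    exact Finset.sum_congr rfl fun j hj => by rw [walsh_congr (Finset.mem_range.1 hj) h]
  refine ⟨hcongr, fun n x => ?_⟩
  have hupd : ∀ k < n, Function.update x n (x n + 1) k = x k := fun k hk => by simp [hk.ne]
  have h1 := hcongr n _ _ hupd
  unfold atomicMart at h1 ⊢
  rw [Finset.sum_range_succ, Finset.sum_range_succ, h1]
  unfold atom
  rw [D_congr le_rfl hupd, rade_add_one (x := x) (y := Function.update x n (x n + 1)) (by simp)]
  ring

lemma D_two_pow_of_mem {N : ℕ} {x : G} (hx : x ∈ I₀ N) : D (2 ^ N) x = 2 ^ N := by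
  rw [D_eq_natCast le_rfl hx]; simp

lemma D_two_pow_of_notMem {N : ℕ} {x : G} (hx : x ∉ I₀ N) : D (2 ^ N) x = 0 := by
  simp only [I₀, cyl, Set.mem_ofPred_eq, not_forall] at hx
  obtain ⟨k, hk, hxk⟩ := hx
  exact D_two_pow_eq_zero (p := k) (by omega) ((zmod_two_cases _).resolve_left hxk)

lemma lintegral_atom (N : ℕ) :
    ∫⁻ x, (‖atom N x‖₊ : ℝ≥0∞) ^ (1 / 2 : ℝ) ∂μG = 1 := by
  have : ∀ x, (‖atom N x‖₊ : ℝ≥0∞) ^ (1 / 2 : ℝ) =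
      (I₀ N).indicator (fun _ => (2 : ℝ≥0∞) ^ N) x := by
    intro x
    by_cases hx : x ∈ I₀ N
    · rw [Set.indicator_of_mem hx, ← rpow_half_four_pow]
      congr 1
      rw [← enorm_eq_nnnorm, Real.enorm_eq_ofReal_abs, atom, D_two_pow_of_mem hx, abs_mul, abs_mul,
        abs_rade, one_mul, ← abs_mul, ← mul_pow, abs_of_nonneg (by positivity),
        ENNReal.ofReal_pow (by norm_num)]
      norm_num
    · rw [Set.indicator_of_notMem hx, atom, D_two_pow_of_notMem hx]
      simp
  simp only [this]
  rw [lintegral_indicator_const (s := I₀ N) (measurableSet_cyl N 0), I₀, measure_cyl, ← mul_pow,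
    ENNReal.mul_inv_cancel (by simp) (by simp), one_pow]

lemma continuous_atom (N : ℕ) : Continuous (atom N) :=
  continuous_const.mul ((continuous_rade N).mul (continuous_D _))

lemma rpow_half_sum_le {ι : Type*} (s : Finset ι) (f : ι → ℝ≥0∞) :
    (∑ i ∈ s, f i) ^ (1 / 2 : ℝ) ≤ ∑ i ∈ s, f i ^ (1 / 2 : ℝ) := by
  classical
  induction s using Finset.induction_on with
  | empty => simp
  | insert a s ha ih =>
    rw [Finset.sum_insert ha, Finset.sum_insert ha]
    exact (ENNReal.rpow_add_le_add_rpow _ _ (by norm_num) (by norm_num)).trans (by gcongr)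

lemma hpNorm_atomicMart_lt_top {c : ℕ → ℝ}
    (hc : ∑' N, (‖c N‖₊ : ℝ≥0∞) ^ (1 / 2 : ℝ) < ⊤) : HpNorm (1 / 2) (atomicMart c) < ⊤ := by
  unfold HpNorm
  refine ENNReal.rpow_lt_top_of_nonneg (by norm_num) (ne_of_lt ?_)
  have hpt : ∀ x, (⨆ n, (‖atomicMart c n x‖₊ : ℝ≥0∞)) ^ (1 / 2 : ℝ) ≤
      ∑' N, (‖c N‖₊ : ℝ≥0∞) ^ (1 / 2 : ℝ) * (‖atom N x‖₊ : ℝ≥0∞) ^ (1 / 2 : ℝ) := by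
    intro x
    rw [one_div, ENNReal.rpow_inv_le_iff (by norm_num)]
    refine iSup_le fun n => ?_
    rw [← ENNReal.rpow_inv_le_iff (by norm_num), ← one_div]
    calc (‖atomicMart c n x‖₊ : ℝ≥0∞) ^ (1 / 2 : ℝ)
        ≤ (∑ N ∈ Finset.range n, (‖c N * atom N x‖₊ : ℝ≥0∞)) ^ (1 / 2 : ℝ) :=
          ENNReal.rpow_le_rpow (by exact_mod_cast nnnorm_sum_le _ _) (by norm_num)
      _ ≤ ∑ N ∈ Finset.range n, (‖c N * atom N x‖₊ : ℝ≥0∞) ^ (1 / 2 : ℝ) := rpow_half_sum_le _ _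
      _ = ∑ N ∈ Finset.range n,
            (‖c N‖₊ : ℝ≥0∞) ^ (1 / 2 : ℝ) * (‖atom N x‖₊ : ℝ≥0∞) ^ (1 / 2 : ℝ) := by
          refine Finset.sum_congr rfl fun N _ => ?_
          rw [nnnorm_mul, ENNReal.coe_mul, ENNReal.mul_rpow_of_nonneg _ _ (by norm_num)]
      _ ≤ _ := ENNReal.sum_le_tsum _
  refine (lintegral_mono hpt).trans_lt ?_
  have hmeas : ∀ N, Measurable fun x => (‖atom N x‖₊ : ℝ≥0∞) ^ (1 / 2 : ℝ) := fun N =>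
    ((continuous_atom N).measurable.nnnorm.coe_nnreal_ennreal).pow_const _
  rw [lintegral_tsum fun N => ((hmeas N).const_mul _).aemeasurable]
  simpa only [lintegral_const_mul _ (hmeas _), lintegral_atom, mul_one] using hc

lemma sum_Icc_one_eq_sum_range (f : ℕ → ℝ) (n : ℕ) :
    ∑ k ∈ Finset.Icc 1 n, f k = ∑ k ∈ Finset.range n, f (k + 1) := by
  induction n with
  | zero => simp
  | succ n ih => rw [Finset.sum_Icc_succ_top (by omega), Finset.sum_range_succ, ih]

lemma S_atomicMart (c : ℕ → ℝ) (m : ℕ) (x : G) :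
    S (atomicMart c) m x = ∑ j ∈ Finset.range m, atomicCoeff c j * walsh j x := by
  simp only [S, mcoeff_atomicMart]

lemma S_atomicMart_two_pow_add (c : ℕ → ℝ) {N q : ℕ} (hq : q ≤ 2 ^ N) (x : G) :
    S (atomicMart c) (2 ^ N + q) x =
      S (atomicMart c) (2 ^ N) x + c N * 2 ^ N * (rade N x * D q x) := by
  simp only [S_atomicMart]
  rw [Finset.sum_range_add, D]
  congr 1
  simp only [Finset.mul_sum]
  refine Finset.sum_congr rfl fun j hj => ?_
  have hj := (Finset.mem_range.1 hj).trans_le hq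
  rw [walsh_two_pow_add hj, atomicCoeff, hi_two_pow_add hj,
    if_neg (by have := Nat.two_pow_pos N; omega)]

lemma abs_S_atomicMart_le (c : ℕ → ℝ) {m M : ℕ} (h : m ≤ M) (x : G) :
    |S (atomicMart c) m x| ≤ ∑ j ∈ Finset.range M, |atomicCoeff c j| := by
  rw [S_atomicMart]
  refine (Finset.abs_sum_le_sum_abs _ _).trans ?_
  simp only [abs_mul, abs_walsh, mul_one]
  exact Finset.sum_le_sum_of_subset_of_nonneg (Finset.range_mono h) fun _ _ _ => abs_nonneg _

lemma two_pow_hi_add_mod {n : ℕ} (hn : 1 ≤ n) : 2 ^ hi n + n % 2 ^ hi n = n := by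
  have h1 : 2 ^ hi n ≤ n := Nat.pow_log_le_self 2 (by omega)
  have h2 : n < 2 ^ (hi n + 1) := Nat.lt_pow_succ_log_self (by norm_num) n
  rw [pow_succ] at h2
  rw [Nat.mod_eq_sub_mod h1, Nat.mod_eq_of_lt (by omega)]
  omega

lemma abs_σ_atomicMart_sub_le (c : ℕ → ℝ) {n : ℕ} (hn : 1 ≤ n) (x : G) :
    |σ (atomicMart c) n x -
      c (hi n) * 2 ^ hi n / n * (rade (hi n) x * fejerSum (n % 2 ^ hi n) x)| ≤
      ∑ j ∈ Finset.range (2 ^ hi n), |atomicCoeff c j| := by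
  set N := hi n
  set q := n % 2 ^ N
  set B := ∑ j ∈ Finset.range (2 ^ N), |atomicCoeff c j|
  have hnq : 2 ^ N + q = n := two_pow_hi_add_mod hn
  have hq : q < 2 ^ N := Nat.mod_lt _ (by positivity)
  have hn0 : (0 : ℝ) < n := by exact_mod_cast hn
  have hsum : ∑ k ∈ Finset.Icc 1 n, S (atomicMart c) k x =
      (∑ k ∈ Finset.range (2 ^ N), S (atomicMart c) (k + 1) x +
        q * S (atomicMart c) (2 ^ N) x) + c N * 2 ^ N * (rade N x * fejerSum q x) := by
    rw [sum_Icc_one_eq_sum_range, ← hnq, Finset.sum_range_add, add_assoc]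
    congr 1
    rw [Finset.sum_congr rfl fun j hj => by
      rw [add_assoc, S_atomicMart_two_pow_add c (q := j + 1)
        (by have := Finset.mem_range.1 hj; omega) x], Finset.sum_add_distrib]
    simp [fejerSum, Finset.mul_sum]
  have hbound : |∑ k ∈ Finset.range (2 ^ N), S (atomicMart c) (k + 1) x +
      q * S (atomicMart c) (2 ^ N) x| ≤ n * B := by
    refine (abs_add_le _ _).trans ?_
    have h1 : |∑ k ∈ Finset.range (2 ^ N), S (atomicMart c) (k + 1) x| ≤ 2 ^ N * B := by
      refine (Finset.abs_sum_le_sum_abs _ _).trans ?_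
      refine (Finset.sum_le_card_nsmul _ _ B fun k hk =>
        abs_S_atomicMart_le c (Finset.mem_range.1 hk) x).trans (le_of_eq ?_)
      simp
    have h2 : |(q : ℝ) * S (atomicMart c) (2 ^ N) x| ≤ q * B := by
      rw [abs_mul, Nat.abs_cast]
      exact mul_le_mul_of_nonneg_left (abs_S_atomicMart_le c le_rfl x) (Nat.cast_nonneg _)
    have h3 : (n : ℝ) = 2 ^ N + q := by rw [← hnq]; push_cast; ring
    rw [h3, add_mul]
    exact add_le_add h1 h2
  unfold σ
  rw [hsum, mul_add, one_div_mul_eq_div, one_div_mul_eq_div, div_mul_eq_mul_div,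
    add_sub_cancel_right, abs_div, Nat.abs_cast, div_le_iff₀ hn0, mul_comm B]
  exact hbound

lemma sum_abs_atomicCoeff_le {c : ℕ → ℝ} (hc : ∀ N, |c N| ≤ 1) {P M : ℕ} (hPM : P < M)
    (hgap : ∀ N, P < N → N < M → c N = 0) :
    ∑ j ∈ Finset.range (2 ^ M), |atomicCoeff c j| ≤ 4 ^ (P + 1) := by
  have hsub : Finset.range (2 ^ (P + 1)) ⊆ Finset.range (2 ^ M) :=
    Finset.range_mono (Nat.pow_le_pow_right (by norm_num) hPM)
  rw [← Finset.sum_subset hsub]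
  · refine (Finset.sum_le_card_nsmul _ _ (2 ^ P) fun j hj => ?_).trans ?_
    · unfold atomicCoeff
      split_ifs with h0
      · simp
      · have hle : hi j ≤ P :=
          Nat.le_of_lt_succ (Nat.log_lt_of_lt_pow h0 (Finset.mem_range.1 hj))
        rw [abs_mul, abs_of_nonneg (by positivity : (0 : ℝ) ≤ 2 ^ hi j)]
        exact (mul_le_of_le_one_left (by positivity) (hc _)).trans
          (pow_le_pow_right₀ (by norm_num) hle)
    · simp only [Finset.card_range, nsmul_eq_mul, Nat.cast_pow, Nat.cast_ofNat]
      rw [show (4 : ℝ) ^ (P + 1) = 2 ^ (P + 1) * 2 ^ (P + 1) by rw [← mul_pow]; norm_num]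
      gcongr
      · norm_num
      · omega
  · intro j hj hj'
    simp only [Finset.mem_range, not_lt] at hj hj'
    have h0 : j ≠ 0 := by have := Nat.two_pow_pos (P + 1); omega
    have h1 : P < hi j := Nat.le_log_of_pow_le (by norm_num) hj'
    have h2 : hi j < M := Nat.log_lt_of_lt_pow h0 hj
    simp [atomicCoeff, hgap _ h1 h2]

lemma le_sqrt_mul_card {n : ℕ} {γ φ Q : ℝ} (hγ0 : 0 ≤ γ) (hγ1 : γ ≤ 1) (hφ : 1 ≤ φ) (hQ : 1 ≤ Q)
    (h : 2048 * Q ^ 2 ≤ γ * ((V n : ℝ) ^ 2 / φ)) :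
    Q ≤ √(γ / (2 * φ)) * ((blockStarts n (hi n)).card * 8⁻¹) := by
  have hφ0 : 0 < φ := by linarith
  have hV : (V n : ℝ) ≤ 2 * (blockStarts n (hi n)).card + 4 := by
    exact_mod_cast V_le_card_blockStarts
  have hV2 : (2048 : ℝ) ≤ (V n : ℝ) ^ 2 := by
    have h1 : γ * ((V n : ℝ) ^ 2 / φ) ≤ (V n : ℝ) ^ 2 :=
      (mul_le_of_le_one_left (by positivity) hγ1).trans (div_le_self (by positivity) hφ)
    nlinarith
  have hV8 : (8 : ℝ) ≤ V n := by
    have : (0 : ℝ) ≤ V n := by positivity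
    nlinarith
  have hs : 32 * Q ≤ √(γ / (2 * φ)) * V n := by
    refine (sq_le_sq₀ (by positivity) (by positivity)).1 ?_
    rw [mul_pow, mul_pow, Real.sq_sqrt (by positivity)]
    have : γ / (2 * φ) * (V n : ℝ) ^ 2 = γ * ((V n : ℝ) ^ 2 / φ) / 2 := by field_simp
    rw [this]
    linarith
  have hc : (V n : ℝ) / 4 ≤ (blockStarts n (hi n)).card := by linarith
  have := mul_le_mul_of_nonneg_left hc (Real.sqrt_nonneg (γ / (2 * φ)))
  linarith

/-- At an index `n` of large variation, the Fejér mean of an atomic martingale is large. -/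
lemma le_lintegral_σ_atomicMart {c : ℕ → ℝ} (hc : ∀ N, |c N| ≤ 1) {n P : ℕ} (hn : 1 ≤ n)
    (hP : P < hi n) (hgap : ∀ N, P < N → N < hi n → c N = 0) (hγ : 0 ≤ c (hi n))
    {φ : ℝ} (hφ : 1 ≤ φ) (L : ℕ)
    (h : 2048 * ((L : ℝ) + 2 ^ (P + 1)) ^ 2 ≤ c (hi n) * ((V n : ℝ) ^ 2 / φ)) :
    (L : ℝ≥0∞) ≤
      ∫⁻ x, (‖σ (atomicMart c) n x / φ‖₊ : ℝ≥0∞) ^ (1 / 2 : ℝ) ∂μG := by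
  set γ := c (hi n)
  have hφ0 : 0 < φ := by linarith
  have hn0 : (0 : ℝ) < n := by exact_mod_cast hn
  have hpt : ∀ x, ENNReal.ofReal (√(γ / (2 * φ))) *
      (‖fejerSum (n % 2 ^ hi n) x‖₊ : ℝ≥0∞) ^ (1 / 2 : ℝ) ≤
      (‖σ (atomicMart c) n x / φ‖₊ : ℝ≥0∞) ^ (1 / 2 : ℝ) + 2 ^ (P + 1) := by
    intro x
    have hreal : γ / (2 * φ) * |fejerSum (n % 2 ^ hi n) x| ≤
        |σ (atomicMart c) n x / φ| + 4 ^ (P + 1) := by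
      have h1 := (abs_σ_atomicMart_sub_le c hn x).trans (sum_abs_atomicCoeff_le hc hP hgap)
      set m := c (hi n) * 2 ^ hi n / n * (rade (hi n) x * fejerSum (n % 2 ^ hi n) x) with hm
      have h2 : γ / 2 * |fejerSum (n % 2 ^ hi n) x| ≤ |m| := by
        rw [hm, abs_mul, abs_mul, abs_rade, one_mul]
        refine mul_le_mul_of_nonneg_right ?_ (abs_nonneg _)
        refine le_trans ?_ (le_abs_self _)
        have h3 : (n : ℝ) ≤ 2 * 2 ^ hi n := by
          have := (Nat.lt_pow_succ_log_self (b := 2) (by norm_num) n).le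
          rw [pow_succ, mul_comm] at this
          exact_mod_cast this
        rw [div_le_div_iff₀ (by norm_num) hn0]
        have := mul_le_mul_of_nonneg_left h3 hγ
        linarith
      have h4 : |m| ≤ |σ (atomicMart c) n x| + 4 ^ (P + 1) := by
        have := abs_sub_abs_le_abs_sub m (σ (atomicMart c) n x)
        rw [abs_sub_comm] at this
        linarith
      rw [abs_div, abs_of_pos hφ0]
      calc γ / (2 * φ) * |fejerSum (n % 2 ^ hi n) x|
          = γ / 2 * |fejerSum (n % 2 ^ hi n) x| / φ := by field_simp
        _ ≤ (|σ (atomicMart c) n x| + 4 ^ (P + 1)) / φ := by gcongr; exact h2.trans h4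
        _ = |σ (atomicMart c) n x| / φ + 4 ^ (P + 1) / φ := add_div _ _ _
        _ ≤ _ := by gcongr; exact div_le_self (by positivity) hφ
    have hE : ENNReal.ofReal (γ / (2 * φ)) * (‖fejerSum (n % 2 ^ hi n) x‖₊ : ℝ≥0∞) ≤
        (‖σ (atomicMart c) n x / φ‖₊ : ℝ≥0∞) + 4 ^ (P + 1) := by
      rw [← enorm_eq_nnnorm, ← enorm_eq_nnnorm, Real.enorm_eq_ofReal_abs,
        Real.enorm_eq_ofReal_abs, ← ENNReal.ofReal_mul (by positivity)]
      refine (ENNReal.ofReal_le_ofReal hreal).trans (le_of_eq ?_)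
      rw [ENNReal.ofReal_add (by positivity) (by positivity), ENNReal.ofReal_pow (by norm_num)]
      norm_num
    have hsqrt : ENNReal.ofReal (√(γ / (2 * φ))) =
        ENNReal.ofReal (γ / (2 * φ)) ^ (1 / 2 : ℝ) := by
      rw [Real.sqrt_eq_rpow, ENNReal.ofReal_rpow_of_nonneg (by positivity) (by norm_num)]
    rw [hsqrt, ← ENNReal.mul_rpow_of_nonneg _ _ (by norm_num), ← rpow_half_four_pow]
    exact (ENNReal.rpow_le_rpow hE (by norm_num)).trans
      (ENNReal.rpow_add_le_add_rpow _ _ (by norm_num) (by norm_num))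
  have hQ : (1 : ℝ) ≤ (L : ℝ) + 2 ^ (P + 1) := by
    have : (1 : ℝ) ≤ 2 ^ (P + 1) := one_le_pow₀ (by norm_num)
    have : (0 : ℝ) ≤ L := Nat.cast_nonneg _
    linarith
  have hcard := ENNReal.ofReal_le_ofReal
    (le_sqrt_mul_card hγ ((le_abs_self _).trans (hc _)) hφ hQ h)
  have key : (L : ℝ≥0∞) + 2 ^ (P + 1) ≤
      ∫⁻ x, (‖σ (atomicMart c) n x / φ‖₊ : ℝ≥0∞) ^ (1 / 2 : ℝ) ∂μG + 2 ^ (P + 1) := by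
    calc (L : ℝ≥0∞) + 2 ^ (P + 1) = ENNReal.ofReal ((L : ℝ) + 2 ^ (P + 1)) := by
          rw [ENNReal.ofReal_add (by positivity) (by positivity),
            ENNReal.ofReal_pow (by norm_num)]
          simp
      _ ≤ ENNReal.ofReal (√(γ / (2 * φ))) * (((blockStarts n (hi n)).card : ℝ≥0∞) * 8⁻¹) := by
          refine hcard.trans (le_of_eq ?_)
          rw [ENNReal.ofReal_mul (by positivity), ENNReal.ofReal_mul (by positivity),
            ENNReal.ofReal_inv_of_pos (by norm_num)]
          simp
      _ ≤ ENNReal.ofReal (√(γ / (2 * φ))) *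
            ∫⁻ x, (‖fejerSum (n % 2 ^ hi n) x‖₊ : ℝ≥0∞) ^ (1 / 2 : ℝ) ∂μG := by
          gcongr; exact le_lintegral_fejerSum _ _
      _ ≤ ∫⁻ x, ENNReal.ofReal (√(γ / (2 * φ))) *
            (‖fejerSum (n % 2 ^ hi n) x‖₊ : ℝ≥0∞) ^ (1 / 2 : ℝ) ∂μG := lintegral_const_mul_le _ _
      _ ≤ ∫⁻ x, ((‖σ (atomicMart c) n x / φ‖₊ : ℝ≥0∞) ^ (1 / 2 : ℝ) + 2 ^ (P + 1)) ∂μG :=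
          lintegral_mono hpt
      _ = _ := by
          rw [lintegral_add_right _ measurable_const, lintegral_const, measure_univ, mul_one]
  exact (ENNReal.add_le_add_iff_right (by simp)).1 key

lemma natCast_le_LpN_half {f : G → ℝ} {L : ℕ}
    (h : (L : ℝ≥0∞) ≤ ∫⁻ x, (‖f x‖₊ : ℝ≥0∞) ^ (1 / 2 : ℝ) ∂μG) :
    (L : ℝ≥0∞) ≤ LpN (1 / 2) f := by
  unfold LpN
  calc (L : ℝ≥0∞) ≤ (L : ℝ≥0∞) ^ 2 := by exact_mod_cast Nat.le_self_pow (by norm_num) L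
    _ = (L : ℝ≥0∞) ^ (1 / (1 / 2) : ℝ) := by
        rw [← ENNReal.rpow_natCast]; norm_num
    _ ≤ _ := ENNReal.rpow_le_rpow h (by norm_num)

lemma exists_lt_hi_and_le_ratio {nk : ℕ → ℕ} {Φ : ℕ → ℝ} (hΦ1 : ∀ n, 1 ≤ Φ n)
    (hlimsup : ∀ C : ℝ, ∃ᶠ k in atTop, C ≤ (V (nk k) : ℝ) ^ 2 / Φ (nk k)) (P : ℕ) (C : ℝ) :
    ∃ k, P < hi (nk k) ∧ C ≤ (V (nk k) : ℝ) ^ 2 / Φ (nk k) := by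
  set A := ∑ n ∈ Finset.range (2 ^ (P + 1)), (V n : ℝ) ^ 2 / Φ n
  obtain ⟨k, hk⟩ := (hlimsup (max C (A + 1))).exists
  refine ⟨k, ?_, (le_max_left _ _).trans hk⟩
  by_contra hle
  have hmem : nk k ∈ Finset.range (2 ^ (P + 1)) := Finset.mem_range.2
    ((Nat.lt_pow_succ_log_self (by norm_num) _).trans_le
      (Nat.pow_le_pow_right (by norm_num) (Nat.succ_le_succ (not_lt.1 hle))))
  have h1 := Finset.single_le_sum (f := fun n => (V n : ℝ) ^ 2 / Φ n)
    (fun n _ => div_nonneg (sq_nonneg _) (zero_le_one.trans (hΦ1 n))) hmem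
  have h2 := (le_max_right C (A + 1)).trans hk
  linarith

/-- divergence of `σ_{n_k}F/Φ(n_k)` in `L_{1/2}` for some `F ∈ H_{1/2}`
when `limsup V(n_k)²/Φ(n_k) = ∞`. -/
theorem fejer_divergence_half (nk : ℕ → ℕ) (hpos : ∀ k, 1 ≤ nk k)
    (hV : ∀ C : ℕ, ∃ k, C ≤ V (nk k))
    (Φ : ℕ → ℝ) (hΦ1 : ∀ n, 1 ≤ Φ n) (hΦmono : Monotone Φ)
    (hΦtop : Tendsto Φ atTop atTop)
    (hlimsup : ∀ C : ℝ, ∃ᶠ k in atTop, C ≤ (V (nk k) : ℝ) ^ 2 / Φ (nk k)) :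
    ∃ F : ℕ → G → ℝ, MemHp (1/2) F ∧
      (⨆ k, LpN (1/2) (fun x => σ F (nk k) x / Φ (nk k))) = ⊤ := by
  choose κ hκ using fun (i P : ℕ) => exists_lt_hi_and_le_ratio hΦ1 hlimsup P
    (2048 * ((i : ℝ) + 2 ^ (P + 1)) ^ 2 * 4 ^ i)
  let P : ℕ → ℕ := fun i => Nat.rec 0 (fun i p => hi (nk (κ i p))) i
  have hPsucc : ∀ i, P (i + 1) = hi (nk (κ i (P i))) := fun _ => rfl
  have hPmono : StrictMono P := strictMono_nat_of_lt_succ fun i => (hκ i (P i)).1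
  have hinj : Function.Injective fun i => P (i + 1) :=
    hPmono.injective.comp (add_left_injective 1)
  set c : ℕ → ℝ := Function.extend (fun i => P (i + 1)) (fun i => (1 / 4 : ℝ) ^ i) 0
  have hcP : ∀ i, c (P (i + 1)) = (1 / 4) ^ i := fun i => hinj.extend_apply _ _ i
  have hc0 : ∀ N, N ∉ Set.range (fun i => P (i + 1)) → c N = 0 := fun N hN =>
    Function.extend_apply' _ _ _ hN
  have hc1 : ∀ N, |c N| ≤ 1 := by
    intro N
    by_cases hN : N ∈ Set.range fun i => P (i + 1)
    · obtain ⟨i, rfl⟩ := hN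
      simp only [hcP]
      rw [abs_of_nonneg (by positivity)]
      exact pow_le_one₀ (by norm_num) (by norm_num)
    · simp [hc0 N hN]
  refine ⟨atomicMart c, ⟨isDyadicMartingale_atomicMart c, hpNorm_atomicMart_lt_top ?_⟩, ?_⟩
  · have hsupp : Function.support (fun N => (‖c N‖₊ : ℝ≥0∞) ^ (1 / 2 : ℝ)) ⊆
        Set.range fun i => P (i + 1) := by
      intro N hN
      by_contra h
      simp [hc0 N h] at hN
    rw [← hinj.tsum_eq hsupp]
    have hterm : ∀ i, (‖c (P (i + 1))‖₊ : ℝ≥0∞) ^ (1 / 2 : ℝ) = 2⁻¹ ^ i := by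
      intro i
      rw [hcP, ← enorm_eq_nnnorm, Real.enorm_eq_ofReal_abs, abs_of_nonneg (by positivity),
        ENNReal.ofReal_pow (by norm_num), one_div (4 : ℝ),
        ENNReal.ofReal_inv_of_pos (by norm_num), ← ENNReal.inv_pow, ← ENNReal.inv_pow,
        ENNReal.inv_rpow, ← rpow_half_four_pow]
      norm_num
    simp only [hterm, ENNReal.tsum_geometric]
    norm_num
  · refine iSup_eq_top.2 fun b hb => ?_
    obtain ⟨L, hL⟩ := ENNReal.exists_nat_gt hb.ne
    refine ⟨κ L (P L), hL.trans_le (natCast_le_LpN_half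
      (le_lintegral_σ_atomicMart hc1 (hpos _) (hκ L (P L)).1 ?_ ?_ (hΦ1 _) L ?_))⟩
    · intro N h1 h2
      refine hc0 N ?_
      rintro ⟨i, rfl⟩
      rw [← hPsucc] at h2
      have h1 := hPmono.lt_iff_lt (a := L) (b := i + 1) |>.1 h1
      have h2 := hPmono.lt_iff_lt (a := i + 1) (b := L + 1) |>.1 h2
      omega
    · rw [← hPsucc, hcP]; positivity
    · rw [← hPsucc, hcP, one_div, inv_pow, inv_mul_eq_div, le_div_iff₀ (by positivity)]
      exact (hκ L (P L)).2
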